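/- Let Ω = {x ∈ ℝ³ : x₁² + x₂² < R², |x₃| < a} and η(x) = (-x₂, x₁, 0). If v : Ω × [0,T] → ℝ³ is a smooth solution of the incompressible Navier–Stokes equations in Ω with v·n = 0 on the lateral boundary, n·D(v)·τ = 0 for the tangential directions, and periodic boundary conditions in x₃, then d/dt ∫_Ω v(x,t)·η(x) dx = 0; in particular ∫_Ω v(t)·η dx = ∫_Ω v(0)·η dx for all t. -/

import Mathlib

open MeasureTheory

/-- Partial derivative `∂_j f (x)` of a scalar function on `ℝ³`. -/
noncomputable def pd (f : EuclideanSpace ℝ (Fin 3) → ℝ) (j : Fin 3)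
    (x : EuclideanSpace ℝ (Fin 3)) : ℝ :=
  fderiv ℝ f x (EuclideanSpace.single j 1)

/-- The rotational vector field `η(x) = (-x₂, x₁, 0)`. -/
def eta (x : EuclideanSpace ℝ (Fin 3)) : Fin 3 → ℝ := ![-(x 1), x 0, 0]

lemma continuous_pd {f : EuclideanSpace ℝ (Fin 3) → ℝ} (hf : ContDiff ℝ 1 f) (j : Fin 3) :
    Continuous (pd f j) := by
  have := hf.continuous_fderiv (by norm_num)
  unfold pd
  fun_prop

lemma contDiff_pd {f : EuclideanSpace ℝ (Fin 3) → ℝ} (hf : ContDiff ℝ (⊤ : ℕ∞) f) (j : Fin 3) :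
    ContDiff ℝ (⊤ : ℕ∞) (pd f j) := by
  have : ContDiff ℝ (⊤ : ℕ∞) (fderiv ℝ f) := hf.fderiv_right (by norm_num)
  unfold pd
  exact this.clm_apply contDiff_const

lemma box_div (c : Fin 3 → ℝ) (hc : ∀ i, 0 < c i)
    (G : Fin 3 → EuclideanSpace ℝ (Fin 3) → ℝ) (hG : ∀ j, ContDiff ℝ 1 (G j))
    (hface : ∀ (j : Fin 3) (w : Fin 2 → ℝ),
      G j (WithLp.toLp 2 (j.insertNth (c j) w)) = G j (WithLp.toLp 2 (j.insertNth (-c j) w))) :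
    ∫ x in {x : EuclideanSpace ℝ (Fin 3) | ∀ i, |x i| < c i}, ∑ j, pd (G j) j x = 0 := by
  have hmp := PiLp.volume_preserving_toLp (Fin 3)
  have hemb : MeasurableEmbedding (@WithLp.toLp 2 (Fin 3 → ℝ)) :=
    (MeasurableEquiv.toLp 2 (Fin 3 → ℝ)).measurableEmbedding
  rw [← hmp.setIntegral_preimage_emb hemb]
  have hset : (@WithLp.toLp 2 (Fin 3 → ℝ)) ⁻¹' {x : EuclideanSpace ℝ (Fin 3) | ∀ i, |x i| < c i}
      = Set.pi Set.univ fun i => Set.Ioo ((-c) i) (c i) := by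
    ext x; simp [abs_lt]
  have hae : (Set.pi Set.univ fun i => Set.Ioo ((-c) i) (c i)) =ᵐ[volume] Set.Icc (-c) c :=
    Measure.univ_pi_Ioo_ae_eq_Icc
  rw [hset, setIntegral_congr_set hae]
  let L : (Fin 3 → ℝ) →L[ℝ] EuclideanSpace ℝ (Fin 3) :=
    ((EuclideanSpace.equiv (Fin 3) ℝ).symm : (Fin 3 → ℝ) ≃L[ℝ] EuclideanSpace ℝ (Fin 3))
  have hL : ∀ x, L x = WithLp.toLp 2 x := fun x => rfl
  have key := integral_divergence_of_hasFDerivAt_off_countable' (-c) c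
    (fun i => by have := hc i; simp; linarith)
    (fun j x => G j (WithLp.toLp 2 x))
    (fun j x => (fderiv ℝ (G j) (WithLp.toLp 2 x)).comp L) ∅ Set.countable_empty
    (fun i => ((hG i).continuous.comp L.continuous).continuousOn)
    (fun x _ i => by
      have h1 : HasFDerivAt (G i) (fderiv ℝ (G i) (L x)) (L x) :=
        ((hG i).differentiable (by norm_num) _).hasFDerivAt
      exact h1.comp x L.hasFDerivAt)
    (by
      apply ContinuousOn.integrableOn_compact isCompact_Icc
      apply Continuous.continuousOn
      refine continuous_finsetSum _ fun i _ => ?_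
      exact (continuous_pd (hG i) i).comp L.continuous)
  have e1 : ∀ x : Fin 3 → ℝ, ∑ j, pd (G j) j (WithLp.toLp 2 x) =
      ∑ j, ((fderiv ℝ (G j) (WithLp.toLp 2 x)).comp L) (Pi.single j 1) := by
    intro x
    rfl
  simp_rw [e1]
  rw [key]
  apply Finset.sum_eq_zero
  intro j _
  simp only [hface, Pi.neg_apply, sub_self]

lemma deriv_st_zero {t : ℝ} (ht : t ≤ 0 ∨ 1 ≤ t) : deriv Real.smoothTransition t = 0 := by
  rcases ht with ht | ht
  · apply IsLocalMin.deriv_eq_zero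
    refine Filter.Eventually.of_forall fun y => ?_
    rw [Real.smoothTransition.zero_of_nonpos ht]
    exact Real.smoothTransition.nonneg y
  · apply IsLocalMax.deriv_eq_zero
    refine Filter.Eventually.of_forall fun y => ?_
    rw [Real.smoothTransition.one_of_one_le ht]
    exact Real.smoothTransition.le_one y

lemma deriv_st_bound : ∃ M : ℝ, 0 ≤ M ∧ ∀ t, |t| * |deriv Real.smoothTransition t| ≤ M := by
  have hc : Continuous (deriv Real.smoothTransition) :=
    (Real.smoothTransition.contDiff (n := 1)).continuous_deriv (by norm_num)
  obtain ⟨M, hM⟩ := (isCompact_Icc (a := (0:ℝ)) (b := 1)).exists_bound_of_continuousOn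
    hc.continuousOn
  have hM0 : 0 ≤ M := (norm_nonneg _).trans (hM 0 (by simp))
  refine ⟨M, hM0, fun t => ?_⟩
  by_cases ht : t ≤ 0 ∨ 1 ≤ t
  · rw [deriv_st_zero ht]; simpa using hM0
  · push Not at ht
    have h1 := hM t ⟨ht.1.le, ht.2.le⟩
    rw [Real.norm_eq_abs] at h1
    have : |t| ≤ 1 := by rw [abs_of_pos ht.1]; exact ht.2.le
    nlinarith [abs_nonneg t, abs_nonneg (deriv Real.smoothTransition t)]

/-- linear vanishing of a `C¹` function at the lateral boundary -/
lemma lateral_bound (R a : ℝ) (hR : 0 < R) (g : EuclideanSpace ℝ (Fin 3) → ℝ)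
    (hg : ContDiff ℝ 1 g)
    (hz : ∀ x : EuclideanSpace ℝ (Fin 3), (x 0) ^ 2 + (x 1) ^ 2 = R ^ 2 → |x 2| ≤ a → g x = 0) :
    ∃ C : ℝ, 0 ≤ C ∧ ∀ x : EuclideanSpace ℝ (Fin 3), (x 0) ^ 2 + (x 1) ^ 2 < R ^ 2 → |x 2| < a →
      |g x| ≤ C * (R ^ 2 - ((x 0) ^ 2 + (x 1) ^ 2)) := by
  obtain ⟨K, hK⟩ := (isCompact_closedBall (0 : EuclideanSpace ℝ (Fin 3)) (R + |a|)).exists_bound_of_continuousOn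
    (hg.continuous_fderiv (by norm_num)).continuousOn
  have hK0 : 0 ≤ K := (norm_nonneg _).trans (hK 0 (by simp; positivity))
  have hball : ∀ y : EuclideanSpace ℝ (Fin 3), (y 0) ^ 2 + (y 1) ^ 2 ≤ R ^ 2 → |y 2| ≤ a →
      y ∈ Metric.closedBall (0 : EuclideanSpace ℝ (Fin 3)) (R + |a|) := by
    intro y h1 h2
    rw [mem_closedBall_zero_iff, EuclideanSpace.norm_eq]
    apply Real.sqrt_le_iff.2 ⟨by positivity, ?_⟩
    simp only [Fin.sum_univ_three, Real.norm_eq_abs, sq_abs]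
    have : (y 2)^2 ≤ |a|^2 := by
      rw [← sq_abs (y 2)]
      exact pow_le_pow_left₀ (abs_nonneg _) (h2.trans (le_abs_self a)) 2
    nlinarith [abs_nonneg a, mul_nonneg hR.le (abs_nonneg a)]
  refine ⟨K / R, by positivity, fun x hx hxa => ?_⟩
  -- nearest boundary point
  obtain ⟨y, hy, hya, hd⟩ : ∃ y : EuclideanSpace ℝ (Fin 3), (y 0) ^ 2 + (y 1) ^ 2 = R ^ 2 ∧ |y 2| ≤ a ∧
      ‖x - y‖ ≤ (R ^ 2 - ((x 0) ^ 2 + (x 1) ^ 2)) / R := by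
    set r := Real.sqrt ((x 0) ^ 2 + (x 1) ^ 2) with hr
    have hr2 : r ^ 2 = (x 0) ^ 2 + (x 1) ^ 2 := Real.sq_sqrt (by positivity)
    have hr0 : 0 ≤ r := Real.sqrt_nonneg _
    have hrR : r < R := by nlinarith
    have hq : R - r ≤ (R ^ 2 - ((x 0) ^ 2 + (x 1) ^ 2)) / R := by
      rw [le_div_iff₀ hR, ← hr2]; nlinarith
    obtain ⟨u, w, huw, hu, hw⟩ : ∃ u w : ℝ, u ^ 2 + w ^ 2 = 1 ∧ x 0 = r * u ∧ x 1 = r * w := by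
      by_cases h0 : r = 0
      · refine ⟨1, 0, by norm_num, ?_, ?_⟩ <;> rw [h0] at hr2 ⊢ <;> nlinarith [sq_nonneg (x 0), sq_nonneg (x 1)]
      · refine ⟨x 0 / r, x 1 / r, ?_, ?_, ?_⟩ <;> field_simp
        exact hr2.symm
    refine ⟨!₂[R * u, R * w, x 2], ?_, ?_, ?_⟩
    · simp; linear_combination R ^ 2 * huw
    · simpa using hxa.le
    · refine le_trans ?_ hq
      rw [EuclideanSpace.norm_eq]
      apply Real.sqrt_le_iff.2 ⟨by linarith, ?_⟩
      simp only [Fin.sum_univ_three, Real.norm_eq_abs, sq_abs]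
      simp [hu, hw]
      apply le_of_eq
      linear_combination (R - r) ^ 2 * huw
  have hmv := (convex_closedBall (0 : EuclideanSpace ℝ (Fin 3)) (R + |a|)).norm_image_sub_le_of_norm_fderiv_le
    (fun z _ => hg.differentiable (by norm_num) z) hK (hball y hy.le hya) (hball x hx.le hxa.le)
  rw [hz y hy hya, sub_zero, Real.norm_eq_abs] at hmv
  calc |g x| ≤ K * ‖x - y‖ := hmv
    _ ≤ K * ((R ^ 2 - ((x 0) ^ 2 + (x 1) ^ 2)) / R) := by gcongr
    _ = _ := by ring

lemma box_subset (c : Fin 3 → ℝ) :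
    {x : EuclideanSpace ℝ (Fin 3) | ∀ i, |x i| < c i} ⊆
      Metric.closedBall 0 (|c 0| + |c 1| + |c 2|) := by
  intro x hx
  rw [mem_closedBall_zero_iff, EuclideanSpace.norm_eq]
  apply Real.sqrt_le_iff.2 ⟨by positivity, ?_⟩
  simp only [Fin.sum_univ_three, Real.norm_eq_abs]
  have h : ∀ i, |x i| ≤ |c i| := fun i => (hx i).le.trans (le_abs_self _)
  have h' : ∀ i, |x i| ^ 2 ≤ |c i| ^ 2 := fun i => pow_le_pow_left₀ (abs_nonneg _) (h i) 2
  nlinarith [h' 0, h' 1, h' 2, mul_nonneg (abs_nonneg (c 0)) (abs_nonneg (c 1)),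
    mul_nonneg (abs_nonneg (c 0)) (abs_nonneg (c 2)), mul_nonneg (abs_nonneg (c 1)) (abs_nonneg (c 2))]

/-- Divergence theorem in the periodic cylinder for fields tangential at the lateral boundary. -/
lemma cyl_div (R a : ℝ) (hR : 0 < R) (ha : 0 < a)
    (F : Fin 3 → EuclideanSpace ℝ (Fin 3) → ℝ) (hF : ∀ j, ContDiff ℝ 1 (F j))
    (hlat : ∀ x : EuclideanSpace ℝ (Fin 3), (x 0) ^ 2 + (x 1) ^ 2 = R ^ 2 → |x 2| ≤ a →
      x 0 * F 0 x + x 1 * F 1 x = 0)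
    (hper : ∀ x : EuclideanSpace ℝ (Fin 3),
      F 2 (x + (2 * a) • EuclideanSpace.single 2 (1 : ℝ)) = F 2 x) :
    ∫ x in {x : EuclideanSpace ℝ (Fin 3) | (x 0) ^ 2 + (x 1) ^ 2 < R ^ 2 ∧ |x 2| < a},
      ∑ j, pd (F j) j x = 0 := by
  set c : Fin 3 → ℝ := ![R, R, a] with hc
  have hcpos : ∀ i, 0 < c i := by intro i; fin_cases i <;> simp [hc, hR, ha]
  set B := {x : EuclideanSpace ℝ (Fin 3) | ∀ i, |x i| < c i} with hB
  set ρ : EuclideanSpace ℝ (Fin 3) → ℝ := fun x => R ^ 2 - ((x 0) ^ 2 + (x 1) ^ 2) with hρ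
  set g : EuclideanSpace ℝ (Fin 3) → ℝ := fun x => x 0 * F 0 x + x 1 * F 1 x with hgdef
  set D : EuclideanSpace ℝ (Fin 3) → ℝ := fun x => ∑ j, pd (F j) j x with hD
  have hcoord : ∀ i : Fin 3, ContDiff ℝ (⊤ : ℕ∞) (fun x : EuclideanSpace ℝ (Fin 3) => x i) :=
    fun i => (EuclideanSpace.proj (𝕜 := ℝ) i).contDiff
  have hρs : ContDiff ℝ (⊤ : ℕ∞) ρ :=
    contDiff_const.sub (((hcoord 0).pow 2).add ((hcoord 1).pow 2))
  have hρc : Continuous ρ := hρs.continuous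
  have hcoord1 : ∀ i : Fin 3, ContDiff ℝ 1 (fun x : EuclideanSpace ℝ (Fin 3) => x i) :=
    fun i => (hcoord i).of_le (by norm_num)
  have hgs : ContDiff ℝ 1 g := ((hcoord1 0).mul (hF 0)).add ((hcoord1 1).mul (hF 1))
  have hDc : Continuous D := continuous_finsetSum _ fun j _ => continuous_pd (hF j) j
  have hρd : ∀ x, HasFDerivAt ρ (-((2 * x 0) • (EuclideanSpace.proj (𝕜 := ℝ) (0 : Fin 3) : EuclideanSpace ℝ (Fin 3) →L[ℝ] ℝ)
      + (2 * x 1) • (EuclideanSpace.proj (𝕜 := ℝ) (1 : Fin 3) : EuclideanSpace ℝ (Fin 3) →L[ℝ] ℝ))) x := by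
    intro x
    have h0 : ∀ i : Fin 3, HasFDerivAt (fun x : EuclideanSpace ℝ (Fin 3) => x i)
      (EuclideanSpace.proj (𝕜 := ℝ) i : EuclideanSpace ℝ (Fin 3) →L[ℝ] ℝ) x :=
      fun i => (EuclideanSpace.proj (𝕜 := ℝ) i : EuclideanSpace ℝ (Fin 3) →L[ℝ] ℝ).hasFDerivAt
    have := (((h0 0).pow 2).add ((h0 1).pow 2)).const_sub (R ^ 2)
    refine this.congr_fderiv ?_
    ext y
    simp
  obtain ⟨M, hM0, hM⟩ := deriv_st_bound
  obtain ⟨C, hC0, hC⟩ := lateral_bound R a hR g hgs hlat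
  have hstd : ∀ t, HasDerivAt Real.smoothTransition (deriv Real.smoothTransition t) t := fun t =>
    ((Real.smoothTransition.contDiff (n := 1)).differentiable (by norm_num) t).hasDerivAt
  set ψ : ℕ → EuclideanSpace ℝ (Fin 3) → ℝ := fun n x => Real.smoothTransition (n * ρ x) with hψ
  have hψs : ∀ n, ContDiff ℝ 1 (ψ n) := fun n =>
    (Real.smoothTransition.contDiff (n := 1)).comp
      (contDiff_const.mul (hρs.of_le (by norm_num)))
  set H : ℕ → EuclideanSpace ℝ (Fin 3) → ℝ := fun n x =>
    ψ n x * D x - 2 * (n * deriv Real.smoothTransition (n * ρ x)) * g x with hH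
  -- divergence of the cut-off field
  have hdivG : ∀ n x, ∑ j, pd (fun y => ψ n y * F j y) j x = H n x := by
    intro n x
    have h1 : ∀ j, pd (fun y => ψ n y * F j y) j x =
        ψ n x * pd (F j) j x + F j x * pd (ψ n) j x := by
      intro j
      unfold pd
      have hh := ((hψs n).differentiable (by norm_num) x).hasFDerivAt.mul
        ((hF j).differentiable (by norm_num) x).hasFDerivAt
      have hh' : HasFDerivAt (fun y => ψ n y * F j y) _ x := hh
      rw [hh'.fderiv]
      simp
    have h2 : ∀ j, pd (ψ n) j x = deriv Real.smoothTransition (n * ρ x) * (n *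
        (-(2 * x 0 * (EuclideanSpace.single j (1:ℝ) : EuclideanSpace ℝ (Fin 3)) 0
          + 2 * x 1 * (EuclideanSpace.single j (1:ℝ) : EuclideanSpace ℝ (Fin 3)) 1))) := by
      intro j
      unfold pd
      have h3 := (hρd x).const_mul (n : ℝ)
      have h4 := (hstd (n * ρ x)).comp_hasFDerivAt x h3
      have hh : HasFDerivAt (ψ n) _ x := h4
      rw [hh.fderiv]
      simp
      split_ifs <;> ring
    simp only [h1, h2, hH, hD, hgdef, Fin.sum_univ_three]
    simp
    ring
  have hzero : ∀ n, ∫ x in B, H n x = 0 := by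
    intro n
    simp only [← hdivG]
    apply box_div c hcpos (fun j y => ψ n y * F j y) (fun j => (hψs n).mul (hF j))
    have hψ0 : ∀ x, ρ x ≤ 0 → ψ n x = 0 := fun x hx =>
      Real.smoothTransition.zero_of_nonpos (mul_nonpos_of_nonneg_of_nonpos (Nat.cast_nonneg n) hx)
    intro j w
    fin_cases j
    · have e1 := hψ0 (WithLp.toLp 2 (Fin.insertNth (0 : Fin 3) (c 0) w)) (by
        simp [hρ, hc]; positivity)
      have e2 := hψ0 (WithLp.toLp 2 (Fin.insertNth (0 : Fin 3) (-c 0) w)) (by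
        simp [hρ, hc]; positivity)
      simp only [Fin.zero_eta] at *
      rw [e1, e2]; simp
    · have e0 : ∀ q : ℝ, (Fin.insertNth (1 : Fin 3) q w : Fin 3 → ℝ) 1 = q := fun q =>
        Fin.insertNth_apply_same (α := fun _ => ℝ) (1 : Fin 3) q w
      have e1 := hψ0 (WithLp.toLp 2 (Fin.insertNth (1 : Fin 3) (c 1) w)) (by
        simp only [hρ, e0]; simp [hc]; positivity)
      have e2 := hψ0 (WithLp.toLp 2 (Fin.insertNth (1 : Fin 3) (-c 1) w)) (by
        simp only [hρ, e0]; simp [hc]; positivity)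
      simp only [Fin.mk_one] at *
      rw [e1, e2]; simp
    · have key : (WithLp.toLp 2 (Fin.insertNth (2 : Fin 3) (c 2) w) : EuclideanSpace ℝ (Fin 3)) =
        WithLp.toLp 2 (Fin.insertNth (2 : Fin 3) (-c 2) w)
          + (2 * a) • EuclideanSpace.single 2 (1 : ℝ) := by
        have e0 : ∀ q : ℝ, (Fin.insertNth (2 : Fin 3) q w : Fin 3 → ℝ) 2 = q := fun q =>
          Fin.insertNth_apply_same (α := fun _ => ℝ) (2 : Fin 3) q w
        have e1 : ∀ q : ℝ, (Fin.insertNth (2 : Fin 3) q w : Fin 3 → ℝ) 0 = w 0 := fun q =>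
          Fin.insertNth_apply_succAbove (α := fun _ => ℝ) (2 : Fin 3) q w 0
        have e2 : ∀ q : ℝ, (Fin.insertNth (2 : Fin 3) q w : Fin 3 → ℝ) 1 = w 1 := fun q =>
          Fin.insertNth_apply_succAbove (α := fun _ => ℝ) (2 : Fin 3) q w 1
        ext i
        fin_cases i
        · simp [e1]
        · simp [e2]
        · simp [e0, hc]; ring
      change ψ n (WithLp.toLp 2 (Fin.insertNth (2 : Fin 3) (c 2) w)) *
          F 2 (WithLp.toLp 2 (Fin.insertNth (2 : Fin 3) (c 2) w)) =
        ψ n (WithLp.toLp 2 (Fin.insertNth (2 : Fin 3) (-c 2) w)) *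
          F 2 (WithLp.toLp 2 (Fin.insertNth (2 : Fin 3) (-c 2) w))
      rw [key, hper]
      congr 1
      simp [hψ, hρ]
  have hBm : MeasurableSet B := by
    have : IsOpen B := by
      have : B = ⋂ i, {x : EuclideanSpace ℝ (Fin 3) | |x i| < c i} := by ext; simp [hB]
      rw [this]
      exact isOpen_iInter_of_finite fun i =>
        isOpen_lt (hcoord i).continuous.abs continuous_const
    exact this.measurableSet
  have hint : ∀ f : EuclideanSpace ℝ (Fin 3) → ℝ, Continuous f → IntegrableOn f B := fun f hf =>
    (hf.continuousOn.integrableOn_compact (isCompact_closedBall _ _)).mono_set (box_subset c)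
  set P := {x : EuclideanSpace ℝ (Fin 3) | 0 < ρ x} with hP
  have hPm : MeasurableSet P := (isOpen_lt continuous_const hρc).measurableSet
  have hlim : Filter.Tendsto (fun n => ∫ x in B, H n x) Filter.atTop
      (nhds (∫ x in B, P.indicator D x)) := by
    have hst' : Continuous (deriv Real.smoothTransition) :=
      (Real.smoothTransition.contDiff (n := 1)).continuous_deriv (by norm_num)
    apply tendsto_integral_of_dominated_convergence (fun x => |D x| + 2 * (M * C))
    · intro n
      apply Continuous.aestronglyMeasurable
      have := (hψs n).continuous
      have := hgs.continuous
      simp only [hH]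
      fun_prop
    · exact hint _ (by fun_prop)
    · intro n
      filter_upwards [ae_restrict_mem hBm] with x hx
      have hx2 : |x 2| < a := hx 2
      have b1 : |ψ n x * D x| ≤ |D x| := by
        rw [abs_mul, abs_of_nonneg (Real.smoothTransition.nonneg _)]
        exact mul_le_of_le_one_left (abs_nonneg _) (Real.smoothTransition.le_one _)
      have b2 : |2 * (n * deriv Real.smoothTransition (n * ρ x)) * g x| ≤ 2 * (M * C) := by
        by_cases h : ρ x ≤ 0
        · rw [deriv_st_zero (Or.inl (mul_nonpos_of_nonneg_of_nonpos (Nat.cast_nonneg n) h))]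
          simp; positivity
        · push Not at h
          have hgx := hC x (by simp only [hρ] at h; linarith) hx2
          change |g x| ≤ C * ρ x at hgx
          have hMx := hM (n * ρ x)
          rw [abs_mul, abs_of_pos h, Nat.abs_cast] at hMx
          rw [abs_mul, abs_mul, abs_mul, Nat.abs_cast, abs_two]
          calc 2 * (n * |deriv Real.smoothTransition (n * ρ x)|) * |g x|
              ≤ 2 * (n * |deriv Real.smoothTransition (n * ρ x)|) * (C * ρ x) := by gcongr
            _ = 2 * ((n * ρ x * |deriv Real.smoothTransition (n * ρ x)|) * C) := by ring
            _ ≤ _ := by gcongr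
      simp only [hH, Real.norm_eq_abs]
      exact (abs_sub _ _).trans (add_le_add b1 b2)
    · refine Filter.Eventually.of_forall fun x => ?_
      by_cases h : ρ x ≤ 0
      · have : ∀ n, H n x = 0 := by
          intro n
          have h3 := mul_nonpos_of_nonneg_of_nonpos (Nat.cast_nonneg (α := ℝ) n) h
          simp only [hH, hψ]
          rw [deriv_st_zero (Or.inl h3), Real.smoothTransition.zero_of_nonpos h3]
          simp
        rw [Set.indicator_of_notMem (by simpa [hP] using h)]
        simp [this]
      · push Not at h
        rw [Set.indicator_of_mem (show x ∈ P from h)]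
        apply tendsto_const_nhds.congr'
        obtain ⟨N, hN⟩ := exists_nat_ge (1 / ρ x)
        filter_upwards [Filter.eventually_ge_atTop N] with n hn
        have h3 : 1 ≤ n * ρ x := by
          rw [div_le_iff₀ h] at hN
          have : (N : ℝ) ≤ n := by exact_mod_cast hn
          nlinarith
        simp only [hH, hψ]
        rw [deriv_st_zero (Or.inr h3), Real.smoothTransition.one_of_one_le h3]
        simp
  simp only [hzero] at hlim
  have h0 := tendsto_nhds_unique hlim tendsto_const_nhds
  rw [setIntegral_indicator hPm] at h0
  have hset : {x : EuclideanSpace ℝ (Fin 3) | (x 0) ^ 2 + (x 1) ^ 2 < R ^ 2 ∧ |x 2| < a} = B ∩ P := by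
    ext x
    simp only [hB, hP, hρ, hc, Set.mem_ofPred_eq, Set.mem_inter_iff, Fin.forall_fin_succ]
    simp
    constructor
    · rintro ⟨h1, h2⟩
      refine ⟨⟨?_, ?_, h2⟩, h1⟩ <;> apply abs_lt_of_sq_lt_sq _ hR.le <;> nlinarith [sq_nonneg (x 0), sq_nonneg (x 1)]
    · rintro ⟨⟨_, _, h2⟩, h1⟩
      exact ⟨h1, h2⟩
  rw [hset]
  exact h0

lemma param_deriv (Ω K : Set (EuclideanSpace ℝ (Fin 3))) (hK : IsCompact K) (hΩK : Ω ⊆ K)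
    (hΩ : MeasurableSet Ω)
    (f : ℝ → EuclideanSpace ℝ (Fin 3) → ℝ)
    (hf : ContDiff ℝ 1 (fun q : ℝ × EuclideanSpace ℝ (Fin 3) => f q.1 q.2)) (t : ℝ) :
    HasDerivAt (fun s => ∫ x in Ω, f s x) (∫ x in Ω, deriv (fun s => f s x) t) t := by
  set f' : ℝ → EuclideanSpace ℝ (Fin 3) → ℝ := fun s x =>
    fderiv ℝ (fun q : ℝ × EuclideanSpace ℝ (Fin 3) => f q.1 q.2) (s, x) (1, 0) with hf'
  have hd : ∀ s x, HasDerivAt (fun s => f s x) (f' s x) s := by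
    intro s x
    have h1 := (hf.differentiable (by norm_num) (s, x)).hasFDerivAt
    have h2 : HasDerivAt (fun s : ℝ => (s, x)) ((1 : ℝ), (0 : EuclideanSpace ℝ (Fin 3))) s :=
      (hasDerivAt_id s).prodMk (hasDerivAt_const s x)
    exact h1.comp_hasDerivAt s h2
  have hfc : Continuous (fun q : ℝ × EuclideanSpace ℝ (Fin 3) =>
    fderiv ℝ (fun q : ℝ × EuclideanSpace ℝ (Fin 3) => f q.1 q.2) q (1, 0)) :=
    (hf.continuous_fderiv (by norm_num)).clm_apply continuous_const
  have hfs : ∀ s, Continuous (f s) := fun s => hf.continuous.comp (Continuous.prodMk_right s)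
  have hfs' : ∀ s, Continuous (f' s) := fun s => hfc.comp (Continuous.prodMk_right s)
  have hint : ∀ f : EuclideanSpace ℝ (Fin 3) → ℝ, Continuous f → IntegrableOn f Ω := fun f hf =>
    (hf.continuousOn.integrableOn_compact hK).mono_set hΩK
  obtain ⟨M, hM⟩ := ((isCompact_Icc (a := t - 1) (b := t + 1)).prod hK).exists_bound_of_continuousOn
    hfc.continuousOn
  have := hasDerivAt_integral_of_dominated_loc_of_deriv_le (μ := volume.restrict Ω)
    (F := f) (F' := f') (x₀ := t) (s := Set.Icc (t - 1) (t + 1)) (bound := fun _ => M)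
    (Icc_mem_nhds (by linarith) (by linarith))
    (Filter.Eventually.of_forall fun s => (hfs s).aestronglyMeasurable)
    (hint _ (hfs t)) (hfs' t).aestronglyMeasurable
    (by
      filter_upwards [ae_restrict_mem hΩ] with x hx s hs
      exact hM (s, x) ⟨hs, hΩK hx⟩)
    (hint _ continuous_const)
    (Filter.Eventually.of_forall fun x s _ => hd s x)
  have e : ∀ x, deriv (fun s => f s x) t = f' t x := fun x => (hd t x).deriv
  simp_rw [e]
  exact this.2

lemma pd_flux (f g h k l : EuclideanSpace ℝ (Fin 3) → ℝ) (j : Fin 3)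
    (x : EuclideanSpace ℝ (Fin 3))
    (hf : DifferentiableAt ℝ f x) (hg : DifferentiableAt ℝ g x) (hh : DifferentiableAt ℝ h x)
    (hk : DifferentiableAt ℝ k x) (hl : DifferentiableAt ℝ l x) :
    pd (fun y => f y * (-(y 1)) + g y * y 0 - h y * (k y * (-(y 1)) + l y * y 0)) j x =
      pd f j x * (-(x 1)) + pd g j x * x 0
      - pd h j x * (k x * (-(x 1)) + l x * x 0)
      - h x * (pd k j x * (-(x 1)) + pd l j x * x 0)
      + (h x * k x - f x) * (EuclideanSpace.single j (1:ℝ) : EuclideanSpace ℝ (Fin 3)) 1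
      + (g x - h x * l x) * (EuclideanSpace.single j (1:ℝ) : EuclideanSpace ℝ (Fin 3)) 0 := by
  have h0 : ∀ i : Fin 3, HasFDerivAt (fun x : EuclideanSpace ℝ (Fin 3) => x i)
      (EuclideanSpace.proj (𝕜 := ℝ) i : EuclideanSpace ℝ (Fin 3) →L[ℝ] ℝ) x :=
      fun i => (EuclideanSpace.proj (𝕜 := ℝ) i : EuclideanSpace ℝ (Fin 3) →L[ℝ] ℝ).hasFDerivAt
  have H := ((hf.hasFDerivAt.mul (h0 1).neg).add (hg.hasFDerivAt.mul (h0 0))).sub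
    (hh.hasFDerivAt.mul ((hk.hasFDerivAt.mul (h0 1).neg).add (hl.hasFDerivAt.mul (h0 0))))
  have H' : HasFDerivAt
    (fun y => f y * (-(y 1)) + g y * y 0 - h y * (k y * (-(y 1)) + l y * y 0)) _ x := H
  unfold pd
  rw [H'.fderiv]
  simp
  split_ifs <;> ring

lemma pd_per (f : EuclideanSpace ℝ (Fin 3) → ℝ) (w : EuclideanSpace ℝ (Fin 3))
    (hf : ∀ x, f (x + w) = f x) (j : Fin 3) (x : EuclideanSpace ℝ (Fin 3)) :
    pd f j (x + w) = pd f j x := by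
  unfold pd
  rw [← fderiv_comp_add_right w]
  simp only [hf]

/-- Conservation of the total swirl (2.7)–(2.8): for a smooth solution of the
incompressible Navier–Stokes equations in the periodic cylinder
`Ω = {r < R, |x₃| < a}` with slip boundary conditions on the lateral boundary
and periodicity in `x₃`, the quantity `∫_Ω v·η dx` is conserved. -/
theorem stmt_7 (R a ν T : ℝ) (hR : 0 < R) (ha : 0 < a) (hν : 0 < ν) (hT : 0 < T)
    (Ω : Set (EuclideanSpace ℝ (Fin 3)))
    (hΩ : Ω = {x | (x 0) ^ 2 + (x 1) ^ 2 < R ^ 2 ∧ |x 2| < a})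
    (v : ℝ → EuclideanSpace ℝ (Fin 3) → Fin 3 → ℝ)
    (p : ℝ → EuclideanSpace ℝ (Fin 3) → ℝ)
    (hv_smooth : ContDiff ℝ (⊤ : ℕ∞) (fun q : ℝ × EuclideanSpace ℝ (Fin 3) => v q.1 q.2))
    (hp_smooth : ContDiff ℝ (⊤ : ℕ∞) (fun q : ℝ × EuclideanSpace ℝ (Fin 3) => p q.1 q.2))
    -- momentum equation: ∂_t v_i + Σ_j v_j ∂_j v_i = Σ_j ∂_j T_{ij},
    -- where T_{ij} = ν (∂_j v_i + ∂_i v_j) − p δ_{ij}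
    (hmom : ∀ t ∈ Set.Icc (0 : ℝ) T, ∀ x ∈ Ω, ∀ i : Fin 3,
      deriv (fun s => v s x i) t + ∑ j : Fin 3, v t x j * pd (fun y => v t y i) j x =
        ∑ j : Fin 3, pd (fun y =>
          ν * (pd (fun z => v t z i) j y + pd (fun z => v t z j) i y) -
            (if i = j then p t y else 0)) j x)
    -- incompressibility
    (hdiv : ∀ t ∈ Set.Icc (0 : ℝ) T, ∀ x ∈ Ω,
      ∑ j : Fin 3, pd (fun y => v t y j) j x = 0)
    -- impermeability on the lateral boundary S₁ (normal n = (x₀/R, x₁/R, 0))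
    (hslip : ∀ t ∈ Set.Icc (0 : ℝ) T, ∀ x : EuclideanSpace ℝ (Fin 3),
      (x 0) ^ 2 + (x 1) ^ 2 = R ^ 2 → |x 2| ≤ a →
        v t x 0 * (x 0 / R) + v t x 1 * (x 1 / R) + v t x 2 * 0 = 0)
    -- vanishing tangential stress on S₁: n·D(v)·τ = 0 for the two tangent vectors
    (hstress : ∀ t ∈ Set.Icc (0 : ℝ) T, ∀ x : EuclideanSpace ℝ (Fin 3),
      (x 0) ^ 2 + (x 1) ^ 2 = R ^ 2 → |x 2| ≤ a →
      ∀ τ : Fin 3 → ℝ, (τ = ![-(x 1) / R, x 0 / R, 0] ∨ τ = ![0, 0, 1]) →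
        ∑ i : Fin 3, ∑ j : Fin 3,
          (![x 0 / R, x 1 / R, 0] i) *
            (pd (fun z => v t z i) j x + pd (fun z => v t z j) i x) * τ j = 0)
    -- periodicity in the x₃-direction (period 2a) for v and p
    (hper_v : ∀ t ∈ Set.Icc (0 : ℝ) T, ∀ x : EuclideanSpace ℝ (Fin 3),
      v t (x + (2 * a) • EuclideanSpace.single 2 (1 : ℝ)) = v t x)
    (hper_p : ∀ t ∈ Set.Icc (0 : ℝ) T, ∀ x : EuclideanSpace ℝ (Fin 3),
      p t (x + (2 * a) • EuclideanSpace.single 2 (1 : ℝ)) = p t x) :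
    (∀ t ∈ Set.Icc (0 : ℝ) T,
      HasDerivAt (fun s => ∫ x in Ω, ∑ i : Fin 3, v s x i * eta x i) 0 t) ∧
    (∀ t ∈ Set.Icc (0 : ℝ) T,
      (∫ x in Ω, ∑ i : Fin 3, v t x i * eta x i) =
        ∫ x in Ω, ∑ i : Fin 3, v 0 x i * eta x i) := by
  have hcoord : ∀ i : Fin 3, ContDiff ℝ (⊤ : ℕ∞) (fun x : EuclideanSpace ℝ (Fin 3) => x i) :=
    fun i => (EuclideanSpace.proj (𝕜 := ℝ) i).contDiff
  have hvi : ∀ i, ContDiff ℝ (⊤ : ℕ∞)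
      (fun q : ℝ × EuclideanSpace ℝ (Fin 3) => v q.1 q.2 i) := fun i => contDiff_pi.1 hv_smooth i
  have hΩm : MeasurableSet Ω := by
    rw [hΩ]
    exact ((isOpen_lt (((hcoord 0).continuous.pow 2).add ((hcoord 1).continuous.pow 2))
      continuous_const).inter (isOpen_lt (hcoord 2).continuous.abs continuous_const)).measurableSet
  have hΩK : Ω ⊆ Metric.closedBall 0 (|(![R, R, a] : Fin 3 → ℝ) 0| + |(![R, R, a] : Fin 3 → ℝ) 1|
      + |(![R, R, a] : Fin 3 → ℝ) 2|) := by
    refine subset_trans ?_ (box_subset ![R, R, a])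
    rw [hΩ]
    rintro x ⟨h1, h2⟩
    simp only [Set.mem_ofPred_eq, Fin.forall_fin_succ]
    simp
    refine ⟨?_, ?_, h2⟩ <;> apply abs_lt_of_sq_lt_sq _ hR.le <;>
      nlinarith [sq_nonneg (x 0), sq_nonneg (x 1)]
  have hmain : ∀ t ∈ Set.Icc (0 : ℝ) T,
      HasDerivAt (fun s => ∫ x in Ω, ∑ i : Fin 3, v s x i * eta x i) 0 t := by
    intro t ht
    have hsm : ContDiff ℝ 1 (fun q : ℝ × EuclideanSpace ℝ (Fin 3) =>
        ∑ i : Fin 3, v q.1 q.2 i * eta q.2 i) := by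
      have h1 : ∀ i, ContDiff ℝ 1
        (fun q : ℝ × EuclideanSpace ℝ (Fin 3) => v q.1 q.2 i) := fun i =>
          (hvi i).of_le (by norm_num)
      have h2 : ∀ i : Fin 3, ContDiff ℝ 1 (fun q : ℝ × EuclideanSpace ℝ (Fin 3) => q.2 i) :=
        fun i => ((hcoord i).of_le (by norm_num)).comp contDiff_snd
      simp only [eta, Fin.sum_univ_three]
      exact (((h1 0).mul (h2 1).neg).add ((h1 1).mul (h2 0))).add ((h1 2).mul contDiff_const)
    have hder := param_deriv Ω _ (isCompact_closedBall _ _) hΩK hΩm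
      (fun s x => ∑ i : Fin 3, v s x i * eta x i) hsm t
    convert hder using 1
    symm
    have hV : ∀ i, ContDiff ℝ (⊤ : ℕ∞) (fun y => v t y i) := fun i =>
      (hvi i).comp (contDiff_prodMk_right t)
    have hp : ContDiff ℝ (⊤ : ℕ∞) (fun y => p t y) := hp_smooth.comp (contDiff_prodMk_right t)
    set S : Fin 3 → Fin 3 → EuclideanSpace ℝ (Fin 3) → ℝ := fun i j y =>
      ν * (pd (fun z => v t z i) j y + pd (fun z => v t z j) i y) -
            (if i = j then p t y else 0) with hS
    have hSs : ∀ i j, ContDiff ℝ (⊤ : ℕ∞) (S i j) := by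
      intro i j
      refine (contDiff_const.mul ((contDiff_pd (hV i) j).add (contDiff_pd (hV j) i))).sub ?_
      split_ifs
      · exact hp
      · exact contDiff_const
    set F : Fin 3 → EuclideanSpace ℝ (Fin 3) → ℝ := fun j y =>
      S 0 j y * (-(y 1)) + S 1 j y * y 0
        - v t y j * (v t y 0 * (-(y 1)) + v t y 1 * y 0) with hF
    have hFs : ∀ j, ContDiff ℝ 1 (F j) := by
      intro j
      have : ContDiff ℝ (⊤ : ℕ∞) (F j) :=
        (((hSs 0 j).mul (hcoord 1).neg).add ((hSs 1 j).mul (hcoord 0))).sub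
          ((hV j).mul (((hV 0).mul (hcoord 1).neg).add ((hV 1).mul (hcoord 0))))
      exact this.of_le (by norm_num)
    have hcyl := cyl_div R a hR ha F hFs
      (by
        intro x hx hxa
        have h1 := hslip t ht x hx hxa
        have h2 := hstress t ht x hx hxa _ (Or.inl rfl)
        have hsl : v t x 0 * x 0 + v t x 1 * x 1 = 0 := by
          field_simp at h1
          linear_combination h1
        simp only [Fin.sum_univ_three] at h2
        simp at h2
        field_simp at h2
        simp only [hF, hS]
        simp
        linear_combination (-(v t x 0 * (-(x 1)) + v t x 1 * x 0)) * hsl + ν * h2)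
      (by
        intro x
        have hpv : ∀ i x, v t (x + (2 * a) • EuclideanSpace.single 2 (1 : ℝ)) i = v t x i :=
          fun i x => congrFun (hper_v t ht x) i
        have hpd : ∀ i j x, pd (fun z => v t z i) j (x + (2 * a) • EuclideanSpace.single 2 (1 : ℝ))
            = pd (fun z => v t z i) j x := fun i j x => pd_per _ _ (hpv i) j x
        simp only [hF, hS, hpv, hpd, hper_p t ht x]
        simp)
    rw [← hΩ] at hcyl
    rw [← hcyl]
    apply setIntegral_congr_fun hΩm
    intro x hx
    have hdt : ∀ i, HasDerivAt (fun s => v s x i) (deriv (fun s => v s x i) t) t := by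
      intro i
      have : ContDiff ℝ (⊤ : ℕ∞) (fun s => v s x i) := (hvi i).comp (contDiff_prodMk_left x)
      exact (this.differentiable (by norm_num) t).hasDerivAt
    have hL : deriv (fun s => ∑ i : Fin 3, v s x i * eta x i) t =
        ∑ i : Fin 3, deriv (fun s => v s x i) t * eta x i :=
      (HasDerivAt.fun_sum fun i _ => (hdt i).mul_const (eta x i)).deriv
    have hdf : ∀ {f : EuclideanSpace ℝ (Fin 3) → ℝ}, ContDiff ℝ (⊤ : ℕ∞) f →
        DifferentiableAt ℝ f x := fun hf => hf.differentiable (by norm_num) x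
    have hpF : ∀ j, pd (F j) j x = _ := fun j =>
      pd_flux (S 0 j) (S 1 j) (fun y => v t y j) (fun y => v t y 0) (fun y => v t y 1) j x
        (hdf (hSs 0 j)) (hdf (hSs 1 j)) (hdf (hV j)) (hdf (hV 0)) (hdf (hV 1))
    have hm0 : _ = ∑ j : Fin 3, pd (S 0 j) j x := hmom t ht x hx 0
    have hm1 : _ = ∑ j : Fin 3, pd (S 1 j) j x := hmom t ht x hx 1
    have hdv := hdiv t ht x hx
    have hsym : S 0 1 x = S 1 0 x := by simp only [hS]; simp; left; ring
    change deriv (fun s => ∑ i : Fin 3, v s x i * eta x i) t = ∑ j, pd (F j) j x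
    rw [hL]
    simp only [hpF]
    simp only [Fin.sum_univ_three] at hm0 hm1 hdv ⊢
    simp [eta]
    linear_combination (-(x 1)) * hm0 + x 0 * hm1
      + (v t x 0 * (-(x 1)) + v t x 1 * x 0) * hdv + hsym
  refine ⟨hmain, ?_⟩
  exact constant_of_has_deriv_right_zero
    (fun s hs => (hmain s hs).continuousAt.continuousWithinAt)
    (fun s hs => (hmain s ⟨hs.1, hs.2.le⟩).hasDerivWithinAt)
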